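/- Let L and S be positive integers with S ≤ L, let γ ∈ (0,1) be the positive root of Lγ + Sγ² = 1, and let (ξ^j)_{j≥1} be the (L,S)-sequence of points. Then there exists a constant k₁ > 0 such that for every integer N ≥ 2 one has N · D(ξ¹, ξ², …, ξ^N) ≤ k₁ · log N. -/

import Mathlib

open Finset Real

noncomputable section

/-- The `k`-th digit of `n` in base `b`. -/
def lsDigit (b n k : ℕ) : ℕ := n / b ^ k % b

/-- Membership in the set `N_{L,S}`: for every `k`, the pair of consecutive digits
`(a_k(n), a_{k+1}(n))` in base `L+S` does not lie in
`{L,…,L+S−1} × {1,…,L+S−1}`. -/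
def memNLS (L S n : ℕ) : Prop :=
  ∀ k : ℕ, ¬ (L ≤ lsDigit (L + S) n k ∧ lsDigit (L + S) n k ≤ L + S - 1 ∧
      1 ≤ lsDigit (L + S) n (k + 1) ∧ lsDigit (L + S) n (k + 1) ≤ L + S - 1)

/-- The modified digit `ã`: `ã = a` if `a ≤ L−1`, and `ã = L + γ(a−L)` if `L ≤ a`. -/
def lsTilde (L : ℕ) (γ : ℝ) (a : ℕ) : ℝ :=
  if a < L then (a : ℝ) else (L : ℝ) + γ * ((a : ℝ) - (L : ℝ))

/-- The radical-inverse-type function `φ_{L,S}(n) = Σ_{k=0}^{M} ã_k(n) γ^{k+1}`,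
with `M = ⌊log_{L+S} n⌋`. -/
def lsPhi (L S : ℕ) (γ : ℝ) (n : ℕ) : ℝ :=
  ∑ k ∈ Finset.range (Nat.log (L + S) n + 1),
    lsTilde L γ (lsDigit (L + S) n k) * γ ^ (k + 1)

/-- The `(L,S)`-sequence of points: `ξ^j = φ_{L,S}(n_j)` where `n_1 < n_2 < ⋯`
is the increasing enumeration of `N_{L,S}` (so `n_j = Nat.nth (memNLS L S) (j-1)`). -/
def lsSeq (L S : ℕ) (γ : ℝ) (j : ℕ) : ℝ :=
  lsPhi L S γ (Nat.nth (memNLS L S) (j - 1))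

/-- One-dimensional discrepancy of the first `N` terms `x 1, …, x N` of a sequence:
`sup_{0 ≤ a < b ≤ 1} |(1/N) Σ_{j=1}^N χ_{[a,b)}(x j) − (b−a)|`. -/
def discrep (x : ℕ → ℝ) (N : ℕ) : ℝ :=
  ⨆ p : {p : ℝ × ℝ // 0 ≤ p.1 ∧ p.1 < p.2 ∧ p.2 ≤ 1},
    |(∑ j ∈ Finset.Icc 1 N,
        Set.indicator (Set.Ico p.1.1 p.1.2) (fun _ => (1 : ℝ)) (x j)) / N
      - (p.1.2 - p.1.1)|

/-- Two-dimensional (star) discrepancy of the first `N` terms of a sequence of points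
in the unit square:
`sup_{0 < a ≤ 1, 0 < b ≤ 1} |(1/N) Σ_{j=1}^N χ_{[0,a)×[0,b)}(x j) − ab|`. -/
def discrep2 (x : ℕ → ℝ × ℝ) (N : ℕ) : ℝ :=
  ⨆ p : {p : ℝ × ℝ // 0 < p.1 ∧ p.1 ≤ 1 ∧ 0 < p.2 ∧ p.2 ≤ 1},
    |(∑ j ∈ Finset.Icc 1 N,
        Set.indicator (Set.Ico (0 : ℝ) p.1.1) (fun _ => (1 : ℝ)) (x j).1 *
        Set.indicator (Set.Ico (0 : ℝ) p.1.2) (fun _ => (1 : ℝ)) (x j).2) / N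
      - p.1.1 * p.1.2|

/-!
An element of `N_{L,S}`, read from its least significant digit, splits into blocks: a digit
`a < L` on its own, or a digit `a ≥ L` together with the `0` that has to follow it. Removing the
first block divides `n` by `b` or `b ^ 2`, and it rescales an interval of length `γ` or `γ ^ 2` to
the unit interval; these `b = L + S` intervals tile `[0, 1)` because `L γ + S γ ^ 2 = 1`.

Let `A X` count the elements of `N_{L,S}` below `X`. Sorting by the first block gives
`A X = L A (X / b) + S A (X / b ^ 2) + O(1)`, so the defect `A (X / b) - γ A X` reproduces itself
with factor `-S γ`. Since `S ≤ L` forces `S γ < 1`, this defect is bounded, and hence each block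
contains its proper share of points up to `O(1)`. The counting error on `[0, x)` is then `O(1)` plus
the error on a rescaled interval inside the single block containing `x`, and there are `O(log N)`
rescalings.
-/

section Counting

lemma count_and_eq_count_nth (p q : ℕ → Prop) [DecidablePred p] [DecidablePred q] (X : ℕ) :
    Nat.count (fun n ↦ p n ∧ q n) X = Nat.count (fun i ↦ q (Nat.nth p i)) (Nat.count p X) := by
  induction X with
  | zero => simp
  | succ X ih =>
    by_cases hX : p X
    · simp [Nat.count_succ, hX, ih]
    · simp [Nat.count_succ, hX, ih]

lemma count_mod_eq_and {a m : ℕ} (ha : a < m) (p : ℕ → Prop) [DecidablePred p] (X : ℕ) :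
    Nat.count (fun n ↦ n % m = a ∧ p n) X =
      Nat.count (fun u ↦ p (a + m * u)) ((X + (m - 1 - a)) / m) := by
  induction X with
  | zero => simp [Nat.div_eq_of_lt (show m - 1 - a < m by omega)]
  | succ X ih =>
    rw [Nat.count_succ, ih, Nat.add_right_comm, Nat.succ_div]
    by_cases hX : X % m = a
    · obtain ⟨u, rfl⟩ : ∃ u, X = a + m * u := ⟨X / m, by rw [← hX, Nat.mod_add_div]⟩
      have hdvd : m ∣ a + m * u + (m - 1 - a) + 1 := ⟨u + 1, by rw [mul_add]; omega⟩
      have hdiv : (a + m * u + (m - 1 - a)) / m = u := by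
        rw [show a + m * u + (m - 1 - a) = m - 1 + m * u by omega,
          Nat.add_mul_div_left _ _ (by omega), Nat.div_eq_of_lt (by omega), zero_add]
      simp [hX, hdvd, hdiv, Nat.count_succ]
    · have hdvd : ¬ m ∣ X + (m - 1 - a) + 1 := by
        rintro ⟨u, hu⟩
        obtain ⟨v, rfl⟩ : ∃ v, u = v + 1 :=
          Nat.exists_eq_succ_of_ne_zero (by rintro rfl; omega)
        rw [mul_add] at hu
        exact hX (by rw [show X = a + m * v by omega, Nat.add_mul_mod_self_left,
          Nat.mod_eq_of_lt ha])
      simp [hX, hdvd]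

lemma count_div_le_count_mod_eq_and {a m : ℕ} (ha : a < m) (p : ℕ → Prop) [DecidablePred p]
    (X : ℕ) :
    Nat.count (fun u ↦ p (a + m * u)) (X / m) ≤ Nat.count (fun n ↦ n % m = a ∧ p n) X := by
  rw [count_mod_eq_and ha]
  exact Nat.count_monotone _ (Nat.div_le_div_right (Nat.le_add_right _ _))

lemma count_mod_eq_and_le_count_div_add_one {a m : ℕ} (ha : a < m) (p : ℕ → Prop)
    [DecidablePred p] (X : ℕ) :
    Nat.count (fun n ↦ n % m = a ∧ p n) X ≤ Nat.count (fun u ↦ p (a + m * u)) (X / m) + 1 := by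
  have hdiv : (X + (m - 1 - a)) / m ≤ X / m + 1 := by
    rw [← Nat.add_div_right X (by omega)]
    exact Nat.div_le_div_right (by omega)
  rw [count_mod_eq_and ha]
  refine (Nat.count_monotone _ hdiv).trans ?_
  rw [Nat.count_succ]
  split_ifs <;> omega

end Counting

lemma exists_eq_sum_add_mul {w : ℕ → ℝ} (hw : ∀ i, 0 < w i) {n : ℕ} {x : ℝ} (hx0 : 0 ≤ x)
    (hxn : x < ∑ i ∈ range n, w i) :
    ∃ a < n, ∃ y ∈ Set.Ico (0 : ℝ) 1, x = ∑ i ∈ range a, w i + w a * y := by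
  induction n with
  | zero => exact absurd hxn (by simpa using hx0)
  | succ n ih =>
    rcases lt_or_ge x (∑ i ∈ range n, w i) with hx | hx
    · obtain ⟨a, ha, hay⟩ := ih hx
      exact ⟨a, by omega, hay⟩
    · rw [Finset.sum_range_succ] at hxn
      refine ⟨n, by omega, (x - ∑ i ∈ range n, w i) / w n, ⟨?_, ?_⟩, ?_⟩
      · exact div_nonneg (sub_nonneg.2 hx) (hw n).le
      · rw [div_lt_one (hw n)]
        linarith
      · rw [mul_div_cancel₀ _ (hw n).ne', add_sub_cancel]

section Discrepancy

lemma sum_indicator_Ico_eq_card_sub_card {ι : Type*} (A : Finset ι) (f : ι → ℝ) {s t : ℝ}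
    (hst : s ≤ t) :
    ∑ j ∈ A, Set.indicator (Set.Ico s t) (fun _ ↦ (1 : ℝ)) (f j) =
      #{j ∈ A | f j < t} - #{j ∈ A | f j < s} := by
  rw [Finset.natCast_card_filter, Finset.natCast_card_filter, ← Finset.sum_sub_distrib]
  refine Finset.sum_congr rfl fun j _ ↦ ?_
  rcases lt_or_ge (f j) s with h | h
  · simp [h, h.not_ge, h.trans_le hst]
  · simp [Set.indicator_apply, h, h.not_gt]

lemma mul_discrep_le {f : ℕ → ℝ} {N : ℕ} {E : ℝ}
    (hE : ∀ t ∈ Set.Icc (0 : ℝ) 1, |(#{j ∈ Finset.Icc 1 N | f j < t} : ℝ) - t * N| ≤ E) :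
    (N : ℝ) * discrep f N ≤ 2 * E := by
  rcases Nat.eq_zero_or_pos N with rfl | hN
  · have := (abs_nonneg _).trans (hE 0 (by simp))
    simpa using this
  have hN' : (0 : ℝ) < N := by exact_mod_cast hN
  have : Nonempty {p : ℝ × ℝ // 0 ≤ p.1 ∧ p.1 < p.2 ∧ p.2 ≤ 1} := ⟨⟨(0, 1), by norm_num⟩⟩
  rw [← le_div_iff₀' hN']
  refine ciSup_le ?_
  rintro ⟨⟨s, t⟩, hs, hst, ht⟩
  have hs' := abs_le.1 (hE s ⟨hs, hst.le.trans ht⟩)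
  have ht' := abs_le.1 (hE t ⟨hs.trans hst.le, ht⟩)
  rw [sum_indicator_Ico_eq_card_sub_card _ _ hst.le, div_sub' hN'.ne', abs_div, abs_of_pos hN']
  gcongr
  rw [abs_le]
  constructor <;> linarith [hs'.1, hs'.2, ht'.1, ht'.2]

end Discrepancy

section Digits

variable {L S a b : ℕ}

lemma lsDigit_add_mul_zero (ha : a < b) (u : ℕ) : lsDigit b (a + b * u) 0 = a := by
  simp [lsDigit, Nat.mod_eq_of_lt ha]

lemma lsDigit_add_mul_succ (ha : a < b) (u k : ℕ) :
    lsDigit b (a + b * u) (k + 1) = lsDigit b u k := by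
  rw [lsDigit, lsDigit, pow_succ', ← Nat.div_div_eq_div_mul,
    Nat.add_mul_div_left _ _ (by omega), Nat.div_eq_of_lt ha, zero_add]

lemma memNLS_zero (L S : ℕ) : memNLS L S 0 := by
  simp [memNLS, lsDigit]

lemma memNLS_add_mul_iff (ha : a < L + S) (u : ℕ) :
    memNLS L S (a + (L + S) * u) ↔ (L ≤ a → u % (L + S) = 0) ∧ memNLS L S u := by
  have hmod : u % (L + S) < L + S := Nat.mod_lt _ (by omega)
  have hdigit : lsDigit (L + S) u 0 = u % (L + S) := by simp [lsDigit]
  unfold memNLS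
  rw [← Nat.and_forall_add_one]
  simp only [lsDigit_add_mul_succ ha, lsDigit_add_mul_zero ha, zero_add, hdigit]
  exact and_congr_left fun _ ↦ by omega

/-- The number of digits of a block, by its least significant digit `a`: an element of `N_{L,S}`
is a concatenation of single digits `a < L` and of digits `a ≥ L` followed by `0`. -/
def lsBlockLen (L a : ℕ) : ℕ := if a < L then 1 else 2

lemma lsBlockLen_pos (L a : ℕ) : 0 < lsBlockLen L a := by
  unfold lsBlockLen
  split_ifs <;> simp

lemma lsBlockLen_le_two (L a : ℕ) : lsBlockLen L a ≤ 2 := by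
  unfold lsBlockLen
  split_ifs <;> simp

lemma sum_lsBlockLen (L S : ℕ) (f : ℕ → ℝ) :
    ∑ a ∈ range (L + S), f (lsBlockLen L a) = L * f 1 + S * f 2 := by
  rw [Finset.sum_range_add, Finset.sum_congr rfl (g := fun _ ↦ f 1)]
  · simp [lsBlockLen]
  · intro a ha
    simp [lsBlockLen, Finset.mem_range.1 ha]

lemma lt_pow_lsBlockLen (ha : a < L + S) : a < (L + S) ^ lsBlockLen L a :=
  ha.trans_le (Nat.le_self_pow (lsBlockLen_pos L a).ne' _)

lemma memNLS_add_pow_lsBlockLen_mul (hL : 0 < L) (ha : a < L + S) (u : ℕ) :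
    memNLS L S (a + (L + S) ^ lsBlockLen L a * u) ↔ memNLS L S u := by
  by_cases haL : a < L
  · simp [lsBlockLen, haL, memNLS_add_mul_iff ha, haL.not_ge]
  · have hzero := memNLS_add_mul_iff (L := L) (S := S) (a := 0) (by omega) u
    simp only [zero_add, hL.not_ge, false_imp_iff, true_and] at hzero
    simp [lsBlockLen, haL, pow_two, mul_assoc, memNLS_add_mul_iff ha, hzero]

lemma mod_pow_lsBlockLen_eq_iff {n : ℕ} (hn : memNLS L S n) (ha : a < L + S) :
    n % (L + S) ^ lsBlockLen L a = a ↔ n % (L + S) = a := by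
  by_cases haL : a < L
  · simp [lsBlockLen, haL]
  simp only [lsBlockLen, haL, if_false, pow_two, Nat.mod_mul]
  constructor
  · intro h
    simpa [Nat.mod_eq_of_lt ha] using congrArg (· % (L + S)) h
  · intro h
    rw [← Nat.mod_add_div n (L + S), h, memNLS_add_mul_iff ha] at hn
    simp [h, hn.1 (not_lt.1 haL)]

lemma exists_eq_add_pow_lsBlockLen_mul (hL : 0 < L) {n : ℕ} (hn : memNLS L S n) :
    ∃ a < L + S, ∃ u, memNLS L S u ∧ n = a + (L + S) ^ lsBlockLen L a * u := by
  have ha : n % (L + S) < L + S := Nat.mod_lt _ (by omega)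
  have hdecomp := Nat.mod_add_div n ((L + S) ^ lsBlockLen L (n % (L + S)))
  rw [(mod_pow_lsBlockLen_eq_iff hn ha).2 rfl] at hdecomp
  exact ⟨_, ha, _, (memNLS_add_pow_lsBlockLen_mul hL ha _).1 (hdecomp.symm ▸ hn), hdecomp.symm⟩

lemma infinite_memNLS (hL : 0 < L) (hb : 1 < L + S) : (Set.ofPred (memNLS L S)).Infinite := by
  refine Set.infinite_of_injective_forall_mem (Nat.pow_right_injective hb) fun k ↦ ?_
  induction k with
  | zero => simpa using (memNLS_add_mul_iff hb 0).2 ⟨by simp, memNLS_zero L S⟩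
  | succ k ih =>
    simpa [pow_succ'] using (memNLS_add_mul_iff (by omega : 0 < L + S) ((L + S) ^ k)).2
      ⟨by omega, ih⟩

end Digits

section RadicalInverse

variable {L S a : ℕ} {γ : ℝ}

lemma lsTilde_zero (L : ℕ) (γ : ℝ) : lsTilde L γ 0 = 0 := by
  simp +contextual [lsTilde]

lemma lsPhi_eq_sum_range (hb : 1 < L + S) (γ : ℝ) {n K : ℕ} (hn : n < K) :
    lsPhi L S γ n = ∑ k ∈ range K, lsTilde L γ (lsDigit (L + S) n k) * γ ^ (k + 1) := by
  refine Finset.sum_subset ?_ fun k _ hk ↦ ?_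
  · exact Finset.range_subset_range.2 (by have := Nat.log_le_self (L + S) n; omega)
  · have hlt : n < (L + S) ^ k := Nat.lt_pow_of_log_lt hb (by simpa using hk)
    simp [lsDigit, Nat.div_eq_of_lt hlt, lsTilde_zero]

lemma lsPhi_zero (L S : ℕ) (γ : ℝ) : lsPhi L S γ 0 = 0 := by
  simp [lsPhi, lsDigit, lsTilde_zero]

lemma lsPhi_add_mul (hb : 1 < L + S) (γ : ℝ) (ha : a < L + S) (u : ℕ) :
    lsPhi L S γ (a + (L + S) * u) = γ * (lsTilde L γ a + lsPhi L S γ u) := by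
  have hu : u < a + (L + S) * u + 1 := by nlinarith
  rw [lsPhi_eq_sum_range hb γ (Nat.lt_succ_of_lt (Nat.lt_succ_self (a + (L + S) * u))),
    Finset.sum_range_succ', lsPhi_eq_sum_range hb γ hu]
  simp only [lsDigit_add_mul_succ ha, lsDigit_add_mul_zero ha]
  rw [mul_add, Finset.mul_sum, add_comm]
  congr 1
  · ring
  · exact Finset.sum_congr rfl fun k _ ↦ by ring

lemma mul_lsTilde_eq_sum (L : ℕ) (γ : ℝ) (a : ℕ) :
    γ * lsTilde L γ a = ∑ i ∈ range a, γ ^ lsBlockLen L i := by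
  induction a with
  | zero => simp [lsTilde_zero]
  | succ a ih =>
    rw [Finset.sum_range_succ, ← ih]
    rcases lt_trichotomy (a + 1) L with h | rfl | h
    · simp only [lsTilde, lsBlockLen, h, show a < L by omega, if_true]
      push_cast
      ring
    · simp only [lsTilde, lsBlockLen, lt_irrefl, lt_add_one, if_true, if_false]
      push_cast
      ring
    · simp only [lsTilde, lsBlockLen, show ¬ a + 1 < L by omega, show ¬ a < L by omega, if_false]
      push_cast
      ring

lemma sum_pow_lsBlockLen_eq_one (hroot : (L : ℝ) * γ + S * γ ^ 2 = 1) :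
    ∑ a ∈ range (L + S), γ ^ lsBlockLen L a = 1 := by
  rw [sum_lsBlockLen L S (γ ^ ·), pow_one, hroot]

lemma sum_pow_lsBlockLen_mono (L : ℕ) (hγ : 0 ≤ γ) :
    Monotone fun a ↦ ∑ i ∈ range a, γ ^ lsBlockLen L i := fun _ _ h ↦
  Finset.sum_le_sum_of_subset_of_nonneg (Finset.range_subset_range.2 h) fun _ _ _ ↦ by positivity

lemma lsPhi_add_pow_lsBlockLen_mul (hb : 1 < L + S) (γ : ℝ) (ha : a < L + S) (u : ℕ) :
    lsPhi L S γ (a + (L + S) ^ lsBlockLen L a * u) =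
      ∑ i ∈ range a, γ ^ lsBlockLen L i + γ ^ lsBlockLen L a * lsPhi L S γ u := by
  rw [← mul_lsTilde_eq_sum]
  by_cases haL : a < L
  · simp [lsBlockLen, haL, lsPhi_add_mul hb γ ha, mul_add]
  · have hzero : lsPhi L S γ ((L + S) * u) = γ * lsPhi L S γ u := by
      simpa [lsTilde_zero] using lsPhi_add_mul hb γ (by omega : 0 < L + S) u
    simp only [lsBlockLen, haL, if_false, pow_two, mul_assoc]
    rw [lsPhi_add_mul hb γ ha, hzero, mul_add]

lemma lsPhi_nonneg (L S : ℕ) (hγ : 0 ≤ γ) (n : ℕ) : 0 ≤ lsPhi L S γ n := by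
  refine Finset.sum_nonneg fun k _ ↦ ?_
  rw [pow_succ', ← mul_assoc, mul_comm _ γ, mul_lsTilde_eq_sum]
  positivity

lemma lsPhi_lt_one (hL : 0 < L) (hb : 1 < L + S) (hγ : 0 < γ)
    (hroot : (L : ℝ) * γ + S * γ ^ 2 = 1) {n : ℕ} (hn : memNLS L S n) :
    lsPhi L S γ n < 1 := by
  induction n using Nat.strong_induction_on with
  | _ n ih =>
  rcases Nat.eq_zero_or_pos n with rfl | hpos
  · simp [lsPhi_zero]
  obtain ⟨a, ha, u, hu, rfl⟩ := exists_eq_add_pow_lsBlockLen_mul hL hn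
  have hlt : u < a + (L + S) ^ lsBlockLen L a * u := by
    have : 1 < (L + S) ^ lsBlockLen L a := Nat.one_lt_pow (lsBlockLen_pos L a).ne' hb
    nlinarith
  calc lsPhi L S γ (a + (L + S) ^ lsBlockLen L a * u)
      = ∑ i ∈ range a, γ ^ lsBlockLen L i + γ ^ lsBlockLen L a * lsPhi L S γ u :=
        lsPhi_add_pow_lsBlockLen_mul hb γ ha u
    _ < ∑ i ∈ range a, γ ^ lsBlockLen L i + γ ^ lsBlockLen L a * 1 := by
        gcongr
        exact ih u hlt hu
    _ = ∑ i ∈ range (a + 1), γ ^ lsBlockLen L i := by rw [Finset.sum_range_succ, mul_one]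
    _ ≤ 1 := sum_pow_lsBlockLen_eq_one hroot ▸ sum_pow_lsBlockLen_mono L hγ.le ha

end RadicalInverse

instance (L S : ℕ) : DecidablePred (memNLS L S) := Classical.decPred _

section BlockRecursion

variable {L S : ℕ} {p : ℕ → Prop} [DecidablePred p]

lemma count_eq_sum_count_mod_pow_lsBlockLen (hb : 0 < L + S) (hp : ∀ n, p n → memNLS L S n)
    (X : ℕ) :
    Nat.count p X =
      ∑ a ∈ range (L + S), Nat.count (fun n ↦ n % (L + S) ^ lsBlockLen L a = a ∧ p n) X := by
  simp only [Nat.count_eq_card_filter_range]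
  rw [Finset.card_eq_sum_card_fiberwise (f := (· % (L + S))) (t := range (L + S))
    fun n _ ↦ by simpa using Nat.mod_lt n hb]
  refine Finset.sum_congr rfl fun a ha ↦ ?_
  rw [Finset.filter_filter]
  congr 1
  refine Finset.filter_congr fun n _ ↦ ?_
  rw [and_comm]
  exact and_congr_left fun hn ↦ (mod_pow_lsBlockLen_eq_iff (hp n hn) (Finset.mem_range.1 ha)).symm

lemma sum_count_block_le (hb : 0 < L + S) (hp : ∀ n, p n → memNLS L S n) (X : ℕ) :
    ∑ a ∈ range (L + S), Nat.count (fun u ↦ p (a + (L + S) ^ lsBlockLen L a * u))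
      (X / (L + S) ^ lsBlockLen L a) ≤ Nat.count p X := by
  rw [count_eq_sum_count_mod_pow_lsBlockLen hb hp]
  exact Finset.sum_le_sum fun a ha ↦
    count_div_le_count_mod_eq_and (lt_pow_lsBlockLen (Finset.mem_range.1 ha)) p X

lemma count_le_sum_count_block_add (hb : 0 < L + S) (hp : ∀ n, p n → memNLS L S n) (X : ℕ) :
    Nat.count p X ≤ ∑ a ∈ range (L + S),
      Nat.count (fun u ↦ p (a + (L + S) ^ lsBlockLen L a * u))
        (X / (L + S) ^ lsBlockLen L a) + (L + S) := by
  rw [count_eq_sum_count_mod_pow_lsBlockLen hb hp]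
  refine (Finset.sum_le_sum fun a ha ↦ count_mod_eq_and_le_count_div_add_one
    (lt_pow_lsBlockLen (Finset.mem_range.1 ha)) p X).trans_eq ?_
  simp [Finset.sum_add_distrib]

lemma abs_count_sub_sum_count_block_le (hb : 0 < L + S) (hp : ∀ n, p n → memNLS L S n) (X : ℕ) :
    |(Nat.count p X : ℝ) - ∑ a ∈ range (L + S),
      (Nat.count (fun u ↦ p (a + (L + S) ^ lsBlockLen L a * u))
        (X / (L + S) ^ lsBlockLen L a) : ℝ)| ≤ L + S := by
  have hlower := sum_count_block_le hb hp X
  have hupper := count_le_sum_count_block_add hb hp X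
  rw [← Nat.cast_le (α := ℝ)] at hlower hupper
  push_cast at hlower hupper
  rw [abs_le]
  constructor <;> linarith [(by positivity : (0 : ℝ) ≤ L + S)]

end BlockRecursion

section CardinalityGrowth

variable {L S : ℕ} {γ : ℝ}

lemma count_memNLS_block (hL : 0 < L) {a : ℕ} (ha : a < L + S) (Y : ℕ) :
    Nat.count (fun u ↦ memNLS L S (a + (L + S) ^ lsBlockLen L a * u)) Y =
      Nat.count (memNLS L S) Y := by
  simp only [memNLS_add_pow_lsBlockLen_mul hL ha]

lemma sum_count_memNLS_le (hL : 0 < L) (X : ℕ) :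
    ∑ a ∈ range (L + S), Nat.count (memNLS L S) (X / (L + S) ^ lsBlockLen L a) ≤
      Nat.count (memNLS L S) X := by
  refine le_of_eq_of_le (Finset.sum_congr rfl fun a ha ↦ ?_)
    (sum_count_block_le (by omega : 0 < L + S) (fun _ h ↦ h) X)
  rw [count_memNLS_block hL (Finset.mem_range.1 ha)]

lemma abs_count_memNLS_sub_le (hL : 0 < L) (X : ℕ) :
    |(Nat.count (memNLS L S) X : ℝ) - (L * Nat.count (memNLS L S) (X / (L + S)) +
      S * Nat.count (memNLS L S) (X / (L + S) ^ 2))| ≤ L + S := by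
  have h := abs_count_sub_sum_count_block_le (p := memNLS L S) (by omega : 0 < L + S)
    (fun _ h ↦ h) X
  rwa [Finset.sum_congr rfl fun a ha ↦ by rw [count_memNLS_block hL (Finset.mem_range.1 ha)],
    sum_lsBlockLen L S fun e ↦ (Nat.count (memNLS L S) (X / (L + S) ^ e) : ℝ), pow_one] at h

lemma le_pow_mul_count_memNLS (hL : 0 < L) (hγ : 0 < γ) (hγ1 : γ ≤ 1)
    (hroot : (L : ℝ) * γ + S * γ ^ 2 = 1) {k X : ℕ} (hX : (L + S) ^ k ≤ X) :
    γ ≤ γ ^ k * Nat.count (memNLS L S) X := by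
  have hb : 0 < L + S := by omega
  induction k using Nat.strong_induction_on generalizing X with
  | _ k ih =>
  rcases lt_or_ge k 2 with hk | hk
  · have hcount : 1 ≤ Nat.count (memNLS L S) X :=
      Nat.one_le_iff_ne_zero.2 <| Nat.count_ne_iff_exists.2
        ⟨0, (pow_pos hb k).trans_le hX, memNLS_zero L S⟩
    calc γ = γ ^ 1 * (1 : ℕ) := by simp
      _ ≤ γ ^ k * Nat.count (memNLS L S) X := by
        gcongr ?_ * (?_ : ℕ)
        exact pow_le_pow_of_le_one hγ.le hγ1 (by omega)
  have hblock (e : ℕ) (he0 : 0 < e) (he : e ≤ 2) :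
      γ ^ e * γ ≤ γ ^ k * Nat.count (memNLS L S) (X / (L + S) ^ e) := by
    have hle : (L + S) ^ (k - e) ≤ X / (L + S) ^ e := by
      rwa [Nat.le_div_iff_mul_le (pow_pos hb e), ← pow_add, Nat.sub_add_cancel (by omega)]
    calc γ ^ e * γ ≤ γ ^ e * (γ ^ (k - e) * Nat.count (memNLS L S) (X / (L + S) ^ e)) := by
          gcongr
          exact ih (k - e) (by omega) hle
      _ = γ ^ k * Nat.count (memNLS L S) (X / (L + S) ^ e) := by
          rw [← mul_assoc, ← pow_add, Nat.add_sub_cancel' (by omega)]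
  calc γ = ∑ a ∈ range (L + S), γ ^ lsBlockLen L a * γ := by
        rw [← Finset.sum_mul, sum_pow_lsBlockLen_eq_one hroot, one_mul]
    _ ≤ ∑ a ∈ range (L + S),
          γ ^ k * (Nat.count (memNLS L S) (X / (L + S) ^ lsBlockLen L a) : ℝ) :=
        Finset.sum_le_sum fun a _ ↦ hblock _ (lsBlockLen_pos L a) (lsBlockLen_le_two L a)
    _ ≤ γ ^ k * Nat.count (memNLS L S) X := by
        rw [← Finset.mul_sum]
        gcongr
        exact_mod_cast sum_count_memNLS_le hL X

lemma abs_count_memNLS_div_sub_le (hL : 0 < L) (hb : 1 < L + S) (hγ : 0 < γ)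
    (hSγ : S * γ < 1) (hroot : (L : ℝ) * γ + S * γ ^ 2 = 1) (X : ℕ) :
    |(Nat.count (memNLS L S) (X / (L + S)) : ℝ) - γ * Nat.count (memNLS L S) X| ≤
      γ * (L + S) / (1 - S * γ) := by
  have hden : 0 < 1 - S * γ := sub_pos.2 hSγ
  induction X using Nat.strong_induction_on with
  | _ X ih =>
  rcases Nat.eq_zero_or_pos X with rfl | hpos
  · simpa using by positivity
  have hdefect := ih (X / (L + S)) (Nat.div_lt_self hpos hb)
  have hrec := abs_count_memNLS_sub_le (S := S) hL X
  rw [Nat.div_div_eq_div_mul, ← pow_two] at hdefect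
  set A := (Nat.count (memNLS L S) X : ℝ)
  set B := (Nat.count (memNLS L S) (X / (L + S)) : ℝ)
  set C := (Nat.count (memNLS L S) (X / (L + S) ^ 2) : ℝ)
  calc |B - γ * A| = |-(S * γ * (C - γ * B)) - γ * (A - (L * B + S * C))| := by
        congr 1
        linear_combination -B * hroot
    _ ≤ |S * γ * (C - γ * B)| + |γ * (A - (L * B + S * C))| := by
        simpa only [abs_neg] using abs_sub (-(S * γ * (C - γ * B))) (γ * (A - (L * B + S * C)))
    _ = S * γ * |C - γ * B| + γ * |A - (L * B + S * C)| := by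
        rw [abs_mul, abs_mul γ, abs_of_nonneg (by positivity), abs_of_pos hγ]
    _ ≤ S * γ * (γ * (L + S) / (1 - S * γ)) + γ * (L + S) := by gcongr
    _ = γ * (L + S) / (1 - S * γ) := by
        field_simp
        ring

lemma abs_count_memNLS_div_pow_sub_le {H : ℝ} (hγ : 0 ≤ γ) (hγ1 : γ ≤ 1)
    (hH : ∀ X, |(Nat.count (memNLS L S) (X / (L + S)) : ℝ) - γ * Nat.count (memNLS L S) X| ≤ H)
    (e X : ℕ) :
    |(Nat.count (memNLS L S) (X / (L + S) ^ e) : ℝ) - γ ^ e * Nat.count (memNLS L S) X| ≤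
      e * H := by
  induction e with
  | zero => simp
  | succ e ih =>
    have hstep := hH (X / (L + S) ^ e)
    rw [Nat.div_div_eq_div_mul, ← pow_succ] at hstep
    set A := (Nat.count (memNLS L S) X : ℝ)
    set B := (Nat.count (memNLS L S) (X / (L + S) ^ e) : ℝ)
    set C := (Nat.count (memNLS L S) (X / (L + S) ^ (e + 1)) : ℝ)
    calc |C - γ ^ (e + 1) * A| = |(C - γ * B) + γ * (B - γ ^ e * A)| := by
          congr 1
          ring
      _ ≤ |C - γ * B| + γ * |B - γ ^ e * A| := by
          simpa only [abs_mul, abs_of_nonneg hγ] using abs_add_le (C - γ * B) (γ * (B - γ ^ e * A))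
      _ ≤ H + 1 * (e * H) := by gcongr
      _ = (e + 1 : ℕ) * H := by
          push_cast
          ring

lemma abs_sum_count_block_sub_le {H : ℝ} (hγ : 0 ≤ γ) (hγ1 : γ ≤ 1)
    (hH : ∀ X, |(Nat.count (memNLS L S) (X / (L + S)) : ℝ) - γ * Nat.count (memNLS L S) X| ≤ H)
    (a : ℕ) {y : ℝ} (hy : y ∈ Set.Icc (0 : ℝ) 1) (X : ℕ) :
    |∑ i ∈ range a, ((Nat.count (memNLS L S) (X / (L + S) ^ lsBlockLen L i) : ℝ) -
        γ ^ lsBlockLen L i * Nat.count (memNLS L S) X) +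
      y * (Nat.count (memNLS L S) (X / (L + S) ^ lsBlockLen L a) -
        γ ^ lsBlockLen L a * Nat.count (memNLS L S) X)| ≤ (a + 1) * (2 * H) := by
  have hH0 : 0 ≤ H := (abs_nonneg _).trans (hH 0)
  set Δ : ℕ → ℝ := fun i ↦ Nat.count (memNLS L S) (X / (L + S) ^ lsBlockLen L i) -
    γ ^ lsBlockLen L i * Nat.count (memNLS L S) X
  have hΔ (i : ℕ) : |Δ i| ≤ 2 * H := by
    refine (abs_count_memNLS_div_pow_sub_le hγ hγ1 hH _ X).trans ?_
    gcongr
    exact_mod_cast lsBlockLen_le_two L i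
  calc |∑ i ∈ range a, Δ i + y * Δ a| ≤ ∑ i ∈ range a, |Δ i| + y * |Δ a| :=
        (abs_add_le _ _).trans <| add_le_add (Finset.abs_sum_le_sum_abs _ _) <| by
          rw [abs_mul, abs_of_nonneg hy.1]
    _ ≤ ∑ i ∈ range a, 2 * H + 1 * (2 * H) := by
        gcongr with i
        · exact hΔ i
        · exact hy.2
        · exact hΔ a
    _ = (a + 1) * (2 * H) := by
        rw [Finset.sum_const, Finset.card_range, nsmul_eq_mul]
        ring

end CardinalityGrowth

section CountingError

variable {L S : ℕ} {γ : ℝ}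

/-- The number of elements of `N_{L,S}` below `X` that `φ_{L,S}` maps to the left of `x`: the
counting function whose deviation from `x · #(N_{L,S} ∩ [0, X))` is the discrepancy. -/
def lsCount (L S : ℕ) (γ x : ℝ) (X : ℕ) : ℕ :=
  Nat.count (fun n ↦ memNLS L S n ∧ lsPhi L S γ n < x) X

lemma lsCount_of_nonpos (L S : ℕ) (hγ : 0 ≤ γ) {x : ℝ} (hx : x ≤ 0) (X : ℕ) :
    lsCount L S γ x X = 0 :=
  Nat.count_iff_forall_not.2 fun n _ h ↦ (h.2.trans_le hx).not_ge (lsPhi_nonneg L S hγ n)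

lemma lsCount_of_one_le (hL : 0 < L) (hb : 1 < L + S) (hγ : 0 < γ)
    (hroot : (L : ℝ) * γ + S * γ ^ 2 = 1) {x : ℝ} (hx : 1 ≤ x) (X : ℕ) :
    lsCount L S γ x X = Nat.count (memNLS L S) X := by
  have hiff : ∀ n, (memNLS L S n ∧ lsPhi L S γ n < x) ↔ memNLS L S n := fun n ↦
    and_iff_left_of_imp fun hn ↦ (lsPhi_lt_one hL hb hγ hroot hn).trans_le hx
  simp only [lsCount, hiff]

lemma count_block_lsPhi_lt (hL : 0 < L) (hb : 1 < L + S) (hγ : 0 < γ) {a : ℕ} (ha : a < L + S)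
    (x : ℝ) (Y : ℕ) :
    Nat.count (fun u ↦ memNLS L S (a + (L + S) ^ lsBlockLen L a * u) ∧
      lsPhi L S γ (a + (L + S) ^ lsBlockLen L a * u) < x) Y =
      lsCount L S γ ((x - ∑ i ∈ range a, γ ^ lsBlockLen L i) / γ ^ lsBlockLen L a) Y := by
  simp only [lsCount, memNLS_add_pow_lsBlockLen_mul hL ha,
    lsPhi_add_pow_lsBlockLen_mul hb γ ha, lt_div_iff₀' (pow_pos hγ _), lt_sub_iff_add_lt']

lemma sum_lsCount_block (hL : 0 < L) (hb : 1 < L + S) (hγ : 0 < γ)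
    (hroot : (L : ℝ) * γ + S * γ ^ 2 = 1) {a : ℕ} (ha : a < L + S) {x y : ℝ}
    (hy : y ∈ Set.Ico (0 : ℝ) 1)
    (hx : x = ∑ i ∈ range a, γ ^ lsBlockLen L i + γ ^ lsBlockLen L a * y) (X : ℕ → ℕ) :
    ∑ i ∈ range (L + S),
      lsCount L S γ ((x - ∑ j ∈ range i, γ ^ lsBlockLen L j) / γ ^ lsBlockLen L i) (X i) =
      ∑ i ∈ range a, Nat.count (memNLS L S) (X i) + lsCount L S γ y (X a) := by
  set T : ℕ → ℝ := fun i ↦ ∑ j ∈ range i, γ ^ lsBlockLen L j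
  have hTmono : Monotone T := sum_pow_lsBlockLen_mono L hγ.le
  have hTsucc (i : ℕ) : T (i + 1) = T i + γ ^ lsBlockLen L i := Finset.sum_range_succ _ _
  have hpow (i : ℕ) : 0 < γ ^ lsBlockLen L i := pow_pos hγ _
  rw [← Finset.sum_subset (Finset.range_subset_range.2 ha), Finset.sum_range_succ]
  · congr 1
    · refine Finset.sum_congr rfl fun i hi ↦ lsCount_of_one_le hL hb hγ hroot ?_ _
      have hTi : T (i + 1) ≤ T a := hTmono (Finset.mem_range.1 hi)
      rw [one_le_div (hpow i)]
      linarith [hTsucc i, mul_nonneg (hpow a).le hy.1]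
    · rw [hx, add_sub_cancel_left, mul_div_cancel_left₀ _ (hpow a).ne']
  · intro i _ hi
    refine lsCount_of_nonpos L S hγ.le (div_nonpos_of_nonpos_of_nonneg ?_ (hpow i).le) _
    have hTi : T (a + 1) ≤ T i := hTmono (by simpa using hi)
    linarith [hTsucc a, mul_le_of_le_one_right (hpow a).le hy.2.le]

lemma abs_lsCount_sub_block_le (hL : 0 < L) (hb : 1 < L + S) (hγ : 0 < γ)
    (hroot : (L : ℝ) * γ + S * γ ^ 2 = 1) {a : ℕ} (ha : a < L + S) {x y : ℝ}
    (hy : y ∈ Set.Ico (0 : ℝ) 1)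
    (hx : x = ∑ i ∈ range a, γ ^ lsBlockLen L i + γ ^ lsBlockLen L a * y) (X : ℕ) :
    |(lsCount L S γ x X : ℝ) - (∑ i ∈ range a,
      (Nat.count (memNLS L S) (X / (L + S) ^ lsBlockLen L i) : ℝ) +
        lsCount L S γ y (X / (L + S) ^ lsBlockLen L a))| ≤ L + S := by
  have hsum := sum_lsCount_block hL hb hγ hroot ha hy hx fun i ↦ X / (L + S) ^ lsBlockLen L i
  rw [← Nat.cast_inj (R := ℝ)] at hsum
  push_cast at hsum
  rw [← hsum, ← Finset.sum_congr rfl fun i hi ↦ congrArg (Nat.cast (R := ℝ))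
    (count_block_lsPhi_lt hL hb hγ (Finset.mem_range.1 hi) x _)]
  exact abs_count_sub_sum_count_block_le (by omega) (fun _ h ↦ h.1) X

lemma abs_lsCount_sub_le (hL : 0 < L) (hb : 1 < L + S) (hγ : 0 < γ) (hγ1 : γ ≤ 1)
    (hroot : (L : ℝ) * γ + S * γ ^ 2 = 1) {H : ℝ}
    (hH : ∀ X, |(Nat.count (memNLS L S) (X / (L + S)) : ℝ) - γ * Nat.count (memNLS L S) X| ≤ H)
    {l X : ℕ} (hX : X < (L + S) ^ l) {x : ℝ} (hx : x ∈ Set.Icc (0 : ℝ) 1) :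
    |(lsCount L S γ x X : ℝ) - x * Nat.count (memNLS L S) X| ≤ (L + S) * (1 + 2 * H) * l := by
  have hH0 : 0 ≤ H := (abs_nonneg _).trans (hH 0)
  induction l generalizing X x with
  | zero =>
    obtain rfl : X = 0 := by simpa using hX
    simp [lsCount]
  | succ l ih =>
  rcases hx.2.eq_or_lt with rfl | hx1
  · rw [lsCount_of_one_le hL hb hγ hroot le_rfl, one_mul, sub_self, abs_zero]
    positivity
  obtain ⟨a, ha, y, hy, hxy⟩ := exists_eq_sum_add_mul (fun i ↦ pow_pos hγ (lsBlockLen L i)) hx.1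
    (hx1.trans_eq (sum_pow_lsBlockLen_eq_one hroot).symm)
  have hdiv : X / (L + S) ^ lsBlockLen L a < (L + S) ^ l := by
    refine Nat.div_lt_of_lt_mul (hX.trans_le ?_)
    rw [← pow_add]
    exact Nat.pow_le_pow_right (by omega) (by have := lsBlockLen_pos L a; omega)
  have hsplit := abs_lsCount_sub_block_le hL hb hγ hroot ha hy hxy X
  have hrest := ih hdiv ⟨hy.1, hy.2.le⟩
  have hshare := abs_sum_count_block_sub_le hγ.le hγ1 hH a ⟨hy.1, hy.2.le⟩ X
  set A := (Nat.count (memNLS L S) X : ℝ)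
  set B := fun i ↦ (Nat.count (memNLS L S) (X / (L + S) ^ lsBlockLen L i) : ℝ)
  have hxA : x * A = ∑ i ∈ range a, γ ^ lsBlockLen L i * A + y * (γ ^ lsBlockLen L a * A) := by
    rw [hxy, ← Finset.sum_mul]
    ring
  have haH : (a + 1) * (2 * H) ≤ (L + S) * (2 * H) :=
    mul_le_mul_of_nonneg_right (by exact_mod_cast ha) (by positivity)
  rw [Finset.sum_sub_distrib] at hshare
  push_cast
  rw [abs_le] at hsplit hrest hshare ⊢
  constructor <;> linarith [hsplit.1, hsplit.2, hrest.1, hrest.2, hshare.1, hshare.2]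

end CountingError

section Sequence

variable {L S : ℕ} {γ : ℝ}

lemma card_filter_lsSeq_lt (hL : 0 < L) (hb : 1 < L + S) (γ : ℝ) (N : ℕ) (x : ℝ) :
    #{j ∈ Finset.Icc 1 N | lsSeq L S γ j < x} =
      lsCount L S γ x (Nat.nth (memNLS L S) N) := by
  rw [lsCount, count_and_eq_count_nth, Nat.count_nth_of_infinite (infinite_memNLS hL hb),
    Nat.count_eq_card_filter_range, Finset.card_filter, Finset.card_filter, Finset.range_eq_Ico,
    ← Finset.Ico_add_one_right_eq_Icc, Finset.sum_Ico_eq_sum_range, Finset.range_eq_Ico]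
  simp [lsSeq]

lemma mul_discrep_lsSeq_le (hL : 0 < L) (hb : 1 < L + S) (hγ : 0 < γ) (hγ1 : γ ≤ 1)
    (hroot : (L : ℝ) * γ + S * γ ^ 2 = 1) {H : ℝ}
    (hH : ∀ X, |(Nat.count (memNLS L S) (X / (L + S)) : ℝ) - γ * Nat.count (memNLS L S) X| ≤ H)
    {N l : ℕ} (hl : Nat.nth (memNLS L S) N < (L + S) ^ l) :
    (N : ℝ) * discrep (lsSeq L S γ) N ≤ 2 * ((L + S) * (1 + 2 * H) * l) := by
  refine mul_discrep_le fun x hx ↦ ?_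
  have h := abs_lsCount_sub_le hL hb hγ hγ1 hroot hH hl hx
  rwa [Nat.count_nth_of_infinite (infinite_memNLS hL hb), ← card_filter_lsSeq_lt hL hb] at h

lemma log_nth_memNLS_add_one_le (hL : 0 < L) (hb : 1 < L + S) (hγ : 0 < γ) (hγ1 : γ < 1)
    (hroot : (L : ℝ) * γ + S * γ ^ 2 = 1) {N : ℕ} (hN : 2 ≤ N) :
    ((Nat.log (L + S) (Nat.nth (memNLS L S) N) + 1 : ℕ) : ℝ) ≤
      (2 / Real.log 2 + 1 / Real.log γ⁻¹) * Real.log N := by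
  have hinf := infinite_memNLS hL hb
  set k := Nat.log (L + S) (Nat.nth (memNLS L S) N)
  have hnth : Nat.nth (memNLS L S) N ≠ 0 :=
    ((Nat.zero_le _).trans_lt (Nat.nth_strictMono hinf (by omega : 0 < N))).ne'
  have hgrowth := le_pow_mul_count_memNLS hL hγ hγ1.le hroot (Nat.pow_log_le_self (L + S) hnth)
  rw [Nat.count_nth_of_infinite hinf] at hgrowth
  have hN0 : (0 : ℝ) < N := by exact_mod_cast (by omega : 0 < N)
  have hlog := Real.log_le_log hγ hgrowth
  rw [Real.log_mul (by positivity) hN0.ne', Real.log_pow] at hlog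
  have hlogγ : 0 < Real.log γ⁻¹ := Real.log_pos ((one_lt_inv₀ hγ).2 hγ1)
  have hk : (k : ℝ) - 1 ≤ Real.log N / Real.log γ⁻¹ := by
    rw [le_div_iff₀ hlogγ, Real.log_inv]
    linarith
  have htwo : 2 ≤ 2 / Real.log 2 * Real.log N := by
    rw [div_mul_eq_mul_div, le_div_iff₀ (Real.log_pos one_lt_two)]
    gcongr
    exact_mod_cast hN
  push_cast
  rw [add_mul, one_div_mul_eq_div]
  linarith

end Sequence

lemma one_lt_add_of_root {L S : ℕ} {γ : ℝ} (hL : 0 < L) (hγ1 : γ < 1)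
    (hroot : (L : ℝ) * γ + S * γ ^ 2 = 1) : 1 < L + S := by
  by_contra! hle
  obtain ⟨rfl, rfl⟩ : L = 1 ∧ S = 0 := by omega
  norm_num at hroot
  linarith

lemma mul_lt_one_of_root {L S : ℕ} {γ : ℝ} (hSL : S ≤ L) (hγ : 0 < γ)
    (hroot : (L : ℝ) * γ + S * γ ^ 2 = 1) : S * γ < 1 := by
  have hle : (S : ℝ) * γ ≤ L * γ := by gcongr
  by_contra! hge
  nlinarith

/-- For `S = 0` this is the classical bound for the van der Corput sequence in base `L`. -/
theorem ls_discrepancy_upper_SleL_general (L S : ℕ) (hL : 0 < L) (hSL : S ≤ L)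
    (γ : ℝ) (hγ0 : 0 < γ) (hγ1 : γ < 1)
    (hroot : (L : ℝ) * γ + (S : ℝ) * γ ^ 2 = 1) :
    ∃ k₁ : ℝ, 0 < k₁ ∧ ∀ N : ℕ, 2 ≤ N →
      (N : ℝ) * discrep (lsSeq L S γ) N ≤ k₁ * Real.log N := by
  have hb : 1 < L + S := one_lt_add_of_root hL hγ1 hroot
  have hdefect := abs_count_memNLS_div_sub_le hL hb hγ0 (mul_lt_one_of_root hSL hγ0 hroot) hroot
  set H : ℝ := γ * (L + S) / (1 - S * γ)
  set c : ℝ := 2 / Real.log 2 + 1 / Real.log γ⁻¹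
  have hH : 0 ≤ H := (abs_nonneg _).trans (hdefect 0)
  have hc : 0 < c := add_pos (div_pos two_pos (Real.log_pos one_lt_two))
    (one_div_pos.2 (Real.log_pos ((one_lt_inv₀ hγ0).2 hγ1)))
  refine ⟨2 * ((L + S) * (1 + 2 * H) * c), by positivity, fun N hN ↦ ?_⟩
  set l := Nat.log (L + S) (Nat.nth (memNLS L S) N) + 1
  calc (N : ℝ) * discrep (lsSeq L S γ) N
      ≤ 2 * ((L + S) * (1 + 2 * H) * l) :=
        mul_discrep_lsSeq_le hL hb hγ0 hγ1.le hroot hdefect (Nat.lt_pow_succ_log_self hb _)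
    _ ≤ 2 * ((L + S) * (1 + 2 * H) * (c * Real.log N)) := by
        gcongr
        exact log_nth_memNLS_add_one_le hL hb hγ0 hγ1 hroot hN
    _ = 2 * ((L + S) * (1 + 2 * H) * c) * Real.log N := by ring

/-- If `S ≤ L`, the `(L,S)`-sequence of points has low discrepancy:
`N · D(ξ¹,…,ξ^N) ≤ k₁ log N` for all `N ≥ 2`. -/
theorem ls_discrepancy_upper_SleL (L S : ℕ) (hL : 0 < L) (hS : 0 < S) (hSL : S ≤ L)
    (γ : ℝ) (hγ0 : 0 < γ) (hγ1 : γ < 1)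
    (hroot : (L : ℝ) * γ + (S : ℝ) * γ ^ 2 = 1) :
    ∃ k₁ : ℝ, 0 < k₁ ∧ ∀ N : ℕ, 2 ≤ N →
      (N : ℝ) * discrep (lsSeq L S γ) N ≤ k₁ * Real.log N :=
  ls_discrepancy_upper_SleL_general L S hL hSL γ hγ0 hγ1 hroot
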